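/- Let ν = (ν_1 ≥ … ≥ ν_k ≥ 0) be a partition, let 1 ≤ t ≤ k, and let n ≥ 1. Then the polynomial s^{[n]}_ν · s^{[n]}_{(ν_1,…,ν_{t−1},ν_{t+1},…,ν_k)} − s^{[n]}_{(ν_1−1,…,ν_{t−1}−1,ν_t,…,ν_k)} · s^{[n]}_{(ν_1+1,…,ν_{t−1}+1,ν_{t+1},…,ν_k)} in x_1,…,x_n is Schur positive, where s^{[n]}_α := 0 if the sequence α is not a partition. -/

import Mathlib

/-- A semistandard Young tableau of shape `(lam 0, lam 1, …, lam (k-1))` (so `lam i` is the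
length of the `(i+1)`-st row), with entries in `{a, a+1, …, b}`: rows weakly increase,
columns strictly increase.  Entries outside the shape are `0`. -/
structure SSYT (k : ℕ) (lam : ℕ → ℤ) (a b : ℕ) where
  entry : ℕ → ℕ → ℕ
  zero_outside : ∀ i j : ℕ, ¬(i < k ∧ (j : ℤ) < lam i) → entry i j = 0
  lower : ∀ i j : ℕ, i < k → (j : ℤ) < lam i → a ≤ entry i j
  upper : ∀ i j : ℕ, i < k → (j : ℤ) < lam i → entry i j ≤ b
  row_weak : ∀ i j₁ j₂ : ℕ, i < k → j₁ ≤ j₂ → (j₂ : ℤ) < lam i → entry i j₁ ≤ entry i j₂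
  col_strict : ∀ i₁ i₂ j : ℕ, i₁ < i₂ → i₂ < k → (j : ℤ) < lam i₂ → entry i₁ j < entry i₂ j

/-- The monomial `Π_i x_i^{m(i,T)}` of a tableau: the product of `x_{T(c)}` over the
cells `c` of the shape. -/
noncomputable def SSYT.weight {k : ℕ} {lam : ℕ → ℤ} {a b : ℕ} (T : SSYT k lam a b) :
    MvPolynomial ℕ ℤ :=
  ∏ i ∈ Finset.range k, ∏ j ∈ Finset.range (lam i).toNat, MvPolynomial.X (T.entry i j)

/-- `(lam 0, …, lam (k-1))` is a partition: weakly decreasing with nonnegative entries. -/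
def IsPartitionSeq (k : ℕ) (lam : ℕ → ℤ) : Prop :=
  (∀ i, i + 1 < k → lam (i + 1) ≤ lam i) ∧ (∀ i, i < k → 0 ≤ lam i)

/-- The Schur polynomial `s^{[a,b]}_lam = Σ_T Π_i x_i^{m(i,T)}`, the sum running over all
semistandard Young tableaux of shape `lam` with entries in `{a,…,b}`; by convention it is
`0` if `lam` is not a partition. -/
noncomputable def schur (k : ℕ) (lam : ℕ → ℤ) (a b : ℕ) : MvPolynomial ℕ ℤ :=
  letI := Classical.dec (IsPartitionSeq k lam)
  if IsPartitionSeq k lam then ∑ᶠ T : SSYT k lam a b, T.weight else 0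

/-- A polynomial in `x_1,…,x_n` is Schur positive if it is a finite sum `Σ_α c_α s^{[n]}_α`
over partitions `α` with coefficients `c_α ∈ ℕ` (encoded by a list of shapes, allowing
repetition). -/
def SchurPositive (n : ℕ) (f : MvPolynomial ℕ ℤ) : Prop :=
  ∃ L : List (ℕ × (ℕ → ℤ)),
    (∀ p ∈ L, IsPartitionSeq p.1 p.2) ∧
    f = (L.map fun p => schur p.1 p.2 1 n).sum

/-!
Write `λ` for `ν` with its first `t - 1` rows shortened by one. By the bialternant formula, each of
the four Schur polynomials is, up to the Vandermonde factor and powers of `x_1 ⋯ x_n`, a maximal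
minor of the matrix `(x_i ^ e)`, whose columns are selected by the beta numbers `λ_j + n - j`. The
beta numbers of `λ` and `ν` agree from position `t` on, so in the Plücker exchange relation that
trades the `t`-th beta number of `λ` against those of `ν` only the first `t` terms survive. One of
them is the subtracted product and the others are, after sorting columns, products of two Schur
polynomials with sign `+1`.

Products of Schur polynomials are Schur positive by the Littlewood–Richardson rule. It is proved by
Stembridge's argument: in the expansion of alternant times Schur polynomial over tableaux, applying
a Bender–Knuth involution to the columns left of the first violation of the lattice condition
cancels everything but the Littlewood–Richardson tableaux. The bialternant formula is the special
case of this rule with empty inner shape.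
-/

/-! ### Alternants -/

lemma eq_comp_swap {ι β : Type*} [DecidableEq ι] {f g : ι → β} {i j : ι}
    (hi : g i = f j) (hj : g j = f i) (hne : ∀ k, k ≠ i → k ≠ j → g k = f k) :
    g = f ∘ Equiv.swap i j := by
  funext k
  rw [Function.comp_apply, Equiv.swap_apply_def]
  split_ifs with hki hkj
  · rw [hki, hi]
  · rw [hkj, hj]
  · exact hne k hki hkj

section Alternant

variable {R ι : Type*} [CommRing R] [Fintype ι] [DecidableEq ι]

/-- The alternant `det (x_i ^ α_j)`: the antisymmetrization of the monomial with exponents `α`. -/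
def alternant (x : ι → R) (α : ι → ℕ) : R :=
  (Matrix.of fun i j => x i ^ α j).det

lemma alternant_comp_perm (x : ι → R) (α : ι → ℕ) (σ : Equiv.Perm ι) :
    alternant x (α ∘ σ) = (Equiv.Perm.sign σ : ℤ) * alternant x α :=
  Matrix.det_permute' σ (Matrix.of fun i j => x i ^ α j)

lemma alternant_eq_zero (x : ι → R) {α : ι → ℕ} {i j : ι} (hij : i ≠ j) (h : α i = α j) :
    alternant x α = 0 :=
  Matrix.det_zero_of_column_eq hij fun k => by simp only [Matrix.of_apply, h]

lemma alternant_comp_swap (x : ι → R) (α : ι → ℕ) {i j : ι} (hij : i ≠ j) :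
    alternant x (α ∘ Equiv.swap i j) = -alternant x α := by
  rw [alternant_comp_perm, Equiv.Perm.sign_swap hij]
  simp

lemma alternant_add_one (x : ι → R) (α : ι → ℕ) :
    alternant x (fun j => α j + 1) = (∏ i, x i) * alternant x α := by
  rw [alternant, alternant, ← Matrix.det_mul_column]
  congr 1
  ext i j
  simp [pow_succ']

lemma alternant_update (x : ι → R) (α : ι → ℕ) (j : ι) (e : ℕ) :
    alternant x (Function.update α j e) =
      (Matrix.of fun i k => x i ^ α k).cramer (fun i => x i ^ e) j := by
  rw [alternant, Matrix.cramer_apply]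
  congr 1
  ext i k
  rcases eq_or_ne k j with rfl | hkj <;> simp [*]

/-- Expand `det A • v` in the columns of `A` by Cramer's rule, then substitute into `B`. -/
lemma det_mul_cramer (A B : Matrix ι ι R) (v : ι → R) (j : ι) :
    A.det * B.cramer v j = ∑ i, A.cramer v i * B.cramer (A.col i) j := by
  have expansion : A.det • v = ∑ i, A.cramer v i • A.col i := by
    rw [← Matrix.mulVec_cramer, Matrix.mulVec_eq_sum]
    simp [Matrix.col, Matrix.transpose]
  calc A.det * B.cramer v j = B.cramer (A.det • v) j := by simp
    _ = ∑ i, A.cramer v i * B.cramer (A.col i) j := by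
      rw [expansion, map_sum, Finset.sum_apply]
      simp

lemma alternant_mul_alternant_update (x : ι → R) (α β : ι → ℕ) (j : ι) (e : ℕ) :
    alternant x α * alternant x (Function.update β j e) =
      ∑ i, alternant x (Function.update α i e) * alternant x (Function.update β j (α i)) := by
  simp only [alternant_update]
  exact det_mul_cramer _ _ _ _

end Alternant

section BetaNumber

variable {R : Type*} [CommRing R] {n : ℕ}

/-- The strictly decreasing exponents `μ + (n - 1, …, 1, 0)` of the numerator in the bialternant
formula for the Schur polynomial of shape `μ`. -/
def betaNumber (n : ℕ) (μ : ℕ → ℕ) (i : Fin n) : ℕ := μ i + (i.rev : ℕ)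

lemma alternant_betaNumber_zero_ne_zero [IsDomain R] {x : Fin n → R}
    (hx : Function.Injective x) : alternant x (betaNumber n 0) ≠ 0 := by
  have hrev : betaNumber n 0 = (fun i : Fin n => (i : ℕ)) ∘ Fin.revPerm := by
    funext i
    simp [betaNumber]
  rw [hrev, alternant_comp_perm]
  have hdet : alternant x (fun i : Fin n => (i : ℕ)) ≠ 0 :=
    Matrix.det_vandermonde_ne_zero_iff.2 hx
  rcases Int.units_eq_one_or (Equiv.Perm.sign (Fin.revPerm (n := n))) with h | h <;>
    simpa [h] using hdet

lemma alternant_rotate (x : Fin n → R) {α β : Fin n → ℕ} {i j : Fin n} (hij : i ≤ j)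
    (hout : ∀ k, k < i ∨ j < k → β k = α k)
    (hshift : ∀ k k' : Fin n, i ≤ k → k < j → (k' : ℕ) = k + 1 → β k = α k')
    (hlast : β j = α i) : alternant x β = (-1) ^ (j - i : ℕ) * alternant x α := by
  have : NeZero n := ⟨fun h => (h ▸ i).elim0⟩
  have hβ : β = α ∘ Fin.cycleIcc i j := by
    funext k
    rw [Function.comp_apply]
    rcases lt_or_ge k i with hki | hik
    · rw [Fin.cycleIcc_of_lt hki, hout k (.inl hki)]
    rcases lt_trichotomy k j with hkj | rfl | hjk
    · rw [Fin.cycleIcc_of_ge_of_lt hik hkj]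
      exact hshift k _ hik hkj (Fin.val_add_one_of_lt' (by omega))
    · rw [Fin.cycleIcc_of_last hij, hlast]
    · rw [Fin.cycleIcc_of_gt hjk, hout k (.inr hjk)]
  rw [hβ, alternant_comp_perm, Fin.sign_cycleIcc_of_le hij]
  simp

end BetaNumber

/-! ### Gelfand–Tsetlin patterns -/

/-- `P` is a Gelfand–Tsetlin pattern with top row `μ`, i.e. a tableau of shape `μ` on the letters
`0, …, n - 1`: `P m r` is the number of letters `< m` in row `r`. Rows are extended constantly
above level `n`, so that patterns are functions on all of `ℕ × ℕ`. -/
structure IsGTPattern (n : ℕ) (μ : ℕ → ℕ) (P : ℕ → ℕ → ℕ) : Prop where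
  bot : ∀ r, P 0 r = 0
  succ_le : ∀ m < n, ∀ r, P (m + 1) (r + 1) ≤ P m r
  le_succ : ∀ m < n, ∀ r, P m r ≤ P (m + 1) r
  top : ∀ m, n ≤ m → ∀ r, P m r = μ r

/-- The number of letters `m` in the columns `c, c + 1, …` of the tableau encoded by `P`. -/
def tailContent (n : ℕ) (P : ℕ → ℕ → ℕ) (c m : ℕ) : ℕ :=
  ∑ r ∈ Finset.range n, ((P (m + 1) r - c) - (P m r - c))

/-- The number of letters `m` in the tableau encoded by `P`. -/
def content (n : ℕ) (P : ℕ → ℕ → ℕ) (m : ℕ) : ℕ := tailContent n P 0 m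

/-- The number of letters `< m` in the columns `0, …, c - 1` of the tableau encoded by `P`. -/
def headSize (n : ℕ) (P : ℕ → ℕ → ℕ) (c m : ℕ) : ℕ := ∑ r ∈ Finset.range n, min (P m r) c

namespace IsGTPattern

variable {n : ℕ} {μ : ℕ → ℕ} {P : ℕ → ℕ → ℕ}

lemma monotone (hP : IsGTPattern n μ P) (r : ℕ) : Monotone fun m => P m r := by
  refine monotone_nat_of_le_succ fun m => ?_
  rcases lt_or_ge m n with hm | hm
  · exact hP.le_succ m hm r
  · rw [hP.top m hm, hP.top (m + 1) (by omega)]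

lemma le_top (hP : IsGTPattern n μ P) (m r : ℕ) : P m r ≤ μ r := by
  rw [← hP.top (max m n) (le_max_right m n) r]
  exact hP.monotone r (le_max_left m n)

lemma eq_zero_of_le (hP : IsGTPattern n μ P) {m : ℕ} (hm : m ≤ n) :
    ∀ {r : ℕ}, m ≤ r → P m r = 0 := by
  induction m with
  | zero => exact fun _ => hP.bot _
  | succ m ih =>
    rintro (_ | r) hr
    · omega
    · have := hP.succ_le m hm r
      rw [ih (by omega) (by omega)] at this
      omega

lemma top_eq_zero (hP : IsGTPattern n μ P) {r : ℕ} (hr : n ≤ r) : μ r = 0 := by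
  rw [← hP.top n le_rfl, hP.eq_zero_of_le le_rfl hr]

lemma eq_zero (hP : IsGTPattern n μ P) (m : ℕ) {r : ℕ} (hr : n ≤ r) : P m r = 0 :=
  Nat.eq_zero_of_le_zero <| hP.top_eq_zero hr ▸ hP.le_top m r

lemma antitone_top (hP : IsGTPattern n μ P) : Antitone μ := by
  refine antitone_nat_of_succ_le fun r => ?_
  cases n with
  | zero => simp [hP.top_eq_zero]
  | succ n =>
    have hlt := hP.succ_le n n.lt_succ_self r
    rw [hP.top _ le_rfl] at hlt
    exact hlt.trans (hP.le_top n r)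

lemma le_top_zero (hP : IsGTPattern n μ P) (m r : ℕ) : P m r ≤ μ 0 :=
  (hP.le_top m r).trans (hP.antitone_top r.zero_le)

lemma content_add_headSize (hP : IsGTPattern n μ P) (c m : ℕ) :
    content n P m + headSize n P c m = tailContent n P c m + headSize n P c (m + 1) := by
  simp only [content, tailContent, headSize, ← Finset.sum_add_distrib]
  refine Finset.sum_congr rfl fun r _ => ?_
  have : P m r ≤ P (m + 1) r := hP.monotone r m.le_succ
  omega

lemma tailContent_antitone (hP : IsGTPattern n μ P) (m : ℕ) :
    Antitone fun c => tailContent n P c m := by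
  refine antitone_nat_of_succ_le fun c => Finset.sum_le_sum fun r _ => ?_
  have : P m r ≤ P (m + 1) r := hP.monotone r m.le_succ
  omega

lemma tailContent_eq_zero (hP : IsGTPattern n μ P) (c : ℕ) {m : ℕ} (hm : n ≤ m) :
    tailContent n P c m = 0 := by
  simp [tailContent, hP.top m hm, hP.top (m + 1) (by omega)]

/-- The letter `m` occurs at most once in column `c`. -/
lemma tailContent_le_succ (hP : IsGTPattern n μ P) (c m : ℕ) :
    tailContent n P c m ≤ tailContent n P (c + 1) m + 1 := by
  rcases le_or_gt n m with hm | hm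
  · simp [hP.tailContent_eq_zero _ hm]
  have partialSum : ∀ N, ∑ r ∈ Finset.range N, ((P (m + 1) r - c) - (P m r - c)) +
      (if c < P (m + 1) N then 1 else 0) ≤
      ∑ r ∈ Finset.range N, ((P (m + 1) r - (c + 1)) - (P m r - (c + 1))) + 1 := by
    intro N
    induction N with
    | zero => simp only [Finset.range_zero, Finset.sum_empty]; split_ifs <;> omega
    | succ N ih =>
      rw [Finset.sum_range_succ, Finset.sum_range_succ]
      have := hP.succ_le m hm N
      have := hP.le_succ m hm N
      split_ifs at * <;> omega
  exact (Nat.le_add_right _ _).trans (partialSum n)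

lemma le_of_tailContent_eq_succ (hP : IsGTPattern n μ P) {c m : ℕ}
    (h : tailContent n P c m = tailContent n P (c + 1) m) {r : ℕ} (hr : P m r ≤ c) :
    P (m + 1) r ≤ c := by
  by_contra! hlt
  have hrn : r < n := by
    by_contra! hnr
    rw [hP.eq_zero (m + 1) hnr] at hlt
    omega
  refine h.not_gt (Finset.sum_lt_sum (fun s _ => ?_) ⟨r, Finset.mem_range.2 hrn, by omega⟩)
  have : P m s ≤ P (m + 1) s := hP.monotone s m.le_succ
  omega

lemma tailContent_top_zero (hP : IsGTPattern n μ P) {c : ℕ} (hc : μ 0 ≤ c) (m : ℕ) :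
    tailContent n P c m = 0 := by
  refine Finset.sum_eq_zero fun r _ => ?_
  have := hP.le_top_zero (m + 1) r
  omega

end IsGTPattern

lemma setOf_isGTPattern_finite (n : ℕ) (μ : ℕ → ℕ) : {P | IsGTPattern n μ P}.Finite := by
  refine Set.Finite.of_finite_image (f := fun P (m r : Fin n) => P m r)
    ((Set.finite_Iic fun _ _ => μ 0).subset ?_) ?_
  · rintro _ ⟨P, hP, rfl⟩
    exact fun m r => IsGTPattern.le_top_zero hP m r
  · intro P hP Q hQ hPQ
    funext m r
    rcases le_or_gt n m with hm | hm
    · rw [IsGTPattern.top hP m hm, IsGTPattern.top hQ m hm]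
    rcases le_or_gt n r with hr | hr
    · rw [IsGTPattern.eq_zero hP m hr, IsGTPattern.eq_zero hQ m hr]
    · exact congrFun (congrFun hPQ ⟨m, hm⟩) ⟨r, hr⟩

/-- The finite set of Gelfand–Tsetlin patterns with top row `μ`; it is empty unless `μ` is weakly
decreasing with at most `n` nonzero parts. -/
noncomputable def gtPatterns (n : ℕ) (μ : ℕ → ℕ) : Finset (ℕ → ℕ → ℕ) :=
  (setOf_isGTPattern_finite n μ).toFinset

lemma mem_gtPatterns {n : ℕ} {μ : ℕ → ℕ} {P : ℕ → ℕ → ℕ} :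
    P ∈ gtPatterns n μ ↔ IsGTPattern n μ P := by
  simp [gtPatterns]

/-! ### Bender–Knuth toggles restricted to the first columns -/

/-- The largest value that the neighbours of `P (k + 1) r` allow in the columns `< c`. -/
def toggleUpper (c k : ℕ) (P : ℕ → ℕ → ℕ) : ℕ → ℕ
  | 0 => min (P (k + 2) 0) c
  | r + 1 => min (min (P (k + 2) (r + 1)) (P k r)) c

/-- The smallest value that the neighbours of `P (k + 1) r` allow in the columns `< c`. -/
def toggleLower (c k : ℕ) (P : ℕ → ℕ → ℕ) (r : ℕ) : ℕ :=
  min (max (P (k + 2) (r + 1)) (P k r)) c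

/-- The Bender–Knuth involution exchanging the letters `k` and `k + 1` in the columns `< c`: the
part of `P (k + 1) r` below `c` is reflected in the interval allowed by its neighbours. -/
def toggle (c k : ℕ) (P : ℕ → ℕ → ℕ) : ℕ → ℕ → ℕ :=
  Function.update P (k + 1) fun r =>
    toggleUpper c k P r + toggleLower c k P r - min (P (k + 1) r) c + (P (k + 1) r - c)

section Toggle

variable {n : ℕ} {μ : ℕ → ℕ} {P : ℕ → ℕ → ℕ} {c k : ℕ}

lemma toggle_of_ne {m : ℕ} (hm : m ≠ k + 1) : toggle c k P m = P m :=
  Function.update_of_ne hm _ _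

lemma toggleUpper_toggle : toggleUpper c k (toggle c k P) = toggleUpper c k P := by
  funext r
  cases r <;> simp [toggleUpper, toggle_of_ne]

lemma toggleLower_toggle : toggleLower c k (toggle c k P) = toggleLower c k P := by
  funext r
  simp [toggleLower, toggle_of_ne]

lemma sum_toggleUpper_add_toggleLower (c k : ℕ) (P : ℕ → ℕ → ℕ) (N : ℕ) :
    ∑ r ∈ Finset.range N, (toggleUpper c k P r + toggleLower c k P r) + toggleUpper c k P N =
      ∑ r ∈ Finset.range N, min (P k r) c + ∑ r ∈ Finset.range (N + 1), min (P (k + 2) r) c := by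
  induction N with
  | zero => simp [toggleUpper]
  | succ N ih =>
    rw [Finset.sum_range_succ, Finset.sum_range_succ _ N, Finset.sum_range_succ _ (N + 1)]
    have : toggleLower c k P N + toggleUpper c k P (N + 1) =
        min (P k N) c + min (P (k + 2) (N + 1)) c := by
      simp only [toggleUpper, toggleLower]; omega
    omega

lemma toggleUpper_le (c k : ℕ) (P : ℕ → ℕ → ℕ) (r : ℕ) : toggleUpper c k P r ≤ c := by
  cases r <;> exact min_le_right _ _

namespace IsGTPattern

lemma toggleLower_le (hP : IsGTPattern n μ P) (hk : k + 1 < n) (r : ℕ) :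
    toggleLower c k P r ≤ min (P (k + 1) r) c := by
  have h₁ : P k r ≤ P (k + 1) r := hP.le_succ k (by omega) r
  have h₂ : P (k + 2) (r + 1) ≤ P (k + 1) r := hP.succ_le (k + 1) hk r
  unfold toggleLower
  omega

lemma le_toggleUpper (hP : IsGTPattern n μ P) (hk : k + 1 < n) (r : ℕ) :
    min (P (k + 1) r) c ≤ toggleUpper c k P r := by
  have h₁ : P (k + 1) r ≤ P (k + 2) r := hP.le_succ (k + 1) hk r
  cases r with
  | zero => simp only [toggleUpper]; omega
  | succ r =>
    have h₂ : P (k + 1) (r + 1) ≤ P k r := hP.succ_le k (by omega) r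
    simp only [toggleUpper]; omega

lemma toggle_sub_self (hP : IsGTPattern n μ P) (hk : k + 1 < n)
    (hc : ∀ r, P k r ≤ c → P (k + 1) r ≤ c) (r : ℕ) :
    toggle c k P (k + 1) r - c = P (k + 1) r - c := by
  have h₁ := hP.toggleLower_le (c := c) hk r
  have h₂ := hP.le_toggleUpper (c := c) hk r
  have h₃ := toggleUpper_le c k P r
  have h₄ := hc r
  simp only [toggle, Function.update_self, toggleLower] at *
  omega

lemma min_toggle_add (hP : IsGTPattern n μ P) (hk : k + 1 < n)
    (hc : ∀ r, P k r ≤ c → P (k + 1) r ≤ c) (r : ℕ) :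
    min (toggle c k P (k + 1) r) c + min (P (k + 1) r) c =
      toggleUpper c k P r + toggleLower c k P r := by
  have h₁ := hP.toggleLower_le (c := c) hk r
  have h₂ := hP.le_toggleUpper (c := c) hk r
  have h₃ := toggleUpper_le c k P r
  have h₄ := hc r
  simp only [toggle, Function.update_self, toggleLower] at *
  omega

lemma le_toggle (hP : IsGTPattern n μ P) (hk : k + 1 < n)
    (hc : ∀ r, P k r ≤ c → P (k + 1) r ≤ c) (r : ℕ) :
    P k r ≤ toggle c k P (k + 1) r ∧ P (k + 2) (r + 1) ≤ toggle c k P (k + 1) r := by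
  have h₁ : P k r ≤ P (k + 1) r := hP.le_succ k (by omega) r
  have h₂ : P (k + 2) (r + 1) ≤ P (k + 1) r := hP.succ_le (k + 1) hk r
  have h₃ := hP.le_toggleUpper (c := c) hk r
  have h₄ := hP.toggle_sub_self hk hc r
  have h₅ := hP.min_toggle_add hk hc r
  unfold toggleLower at h₅
  omega

lemma toggle_le (hP : IsGTPattern n μ P) (hk : k + 1 < n)
    (hc : ∀ r, P k r ≤ c → P (k + 1) r ≤ c) (r : ℕ) :
    toggle c k P (k + 1) r ≤ P (k + 2) r ∧ toggle c k P (k + 1) (r + 1) ≤ P k r := by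
  have upper_le (s : ℕ) : min (toggle c k P (k + 1) s) c ≤ toggleUpper c k P s := by
    have h₁ := hP.toggleLower_le (c := c) hk s
    have h₂ := hP.min_toggle_add hk hc s
    omega
  have h₁ : P (k + 1) r ≤ P (k + 2) r := hP.le_succ (k + 1) hk r
  have h₂ : P (k + 1) (r + 1) ≤ P k r := hP.succ_le k (by omega) r
  have h₃ := hP.toggle_sub_self hk hc r
  have h₄ := hP.toggle_sub_self hk hc (r + 1)
  have h₅ := upper_le r
  have h₆ := upper_le (r + 1)
  refine ⟨?_, by simp only [toggleUpper] at h₆; omega⟩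
  cases r <;> simp only [toggleUpper] at h₅ <;> omega

lemma isGTPattern_toggle (hP : IsGTPattern n μ P) (hk : k + 1 < n)
    (hc : ∀ r, P k r ≤ c → P (k + 1) r ≤ c) : IsGTPattern n μ (toggle c k P) where
  bot r := by rw [toggle_of_ne (by omega), hP.bot]
  succ_le m hm r := by
    rcases eq_or_ne m (k + 1) with rfl | hm'
    · rw [toggle_of_ne (m := k + 1 + 1) (by omega)]
      exact (hP.le_toggle hk hc r).2
    rcases eq_or_ne m k with rfl | hmk
    · rw [toggle_of_ne (m := m) (by omega)]
      exact (hP.toggle_le hk hc r).2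
    · rw [toggle_of_ne (m := m) hm', toggle_of_ne (m := m + 1) (by omega)]
      exact hP.succ_le m hm r
  le_succ m hm r := by
    rcases eq_or_ne m (k + 1) with rfl | hm'
    · rw [toggle_of_ne (m := k + 1 + 1) (by omega)]
      exact (hP.toggle_le hk hc r).1
    rcases eq_or_ne m k with rfl | hmk
    · rw [toggle_of_ne (m := m) (by omega)]
      exact (hP.le_toggle hk hc r).1
    · rw [toggle_of_ne (m := m) hm', toggle_of_ne (m := m + 1) (by omega)]
      exact hP.le_succ m hm r
  top m hm r := by rw [toggle_of_ne (by omega), hP.top m hm]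

lemma toggle_toggle (hP : IsGTPattern n μ P) (hk : k + 1 < n)
    (hc : ∀ r, P k r ≤ c → P (k + 1) r ≤ c) : toggle c k (toggle c k P) = P := by
  have hT := hP.isGTPattern_toggle hk hc
  have hcT (r : ℕ) : toggle c k P k r ≤ c → toggle c k P (k + 1) r ≤ c := by
    have := hc r
    have := hP.toggle_sub_self hk hc r
    rw [toggle_of_ne (by omega)]
    omega
  funext m r
  rcases eq_or_ne m (k + 1) with rfl | hm
  · have h₁ := hP.toggle_sub_self hk hc r
    have h₂ := hP.min_toggle_add hk hc r
    have h₃ := hT.toggle_sub_self hk hcT r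
    have h₄ := hT.min_toggle_add hk hcT r
    rw [toggleUpper_toggle, toggleLower_toggle] at h₄
    omega
  · rw [toggle_of_ne hm, toggle_of_ne hm]

lemma tailContent_toggle (hP : IsGTPattern n μ P) (hk : k + 1 < n)
    (hc : ∀ r, P k r ≤ c → P (k + 1) r ≤ c) {c' : ℕ} (hc' : c ≤ c') (m : ℕ) :
    tailContent n (toggle c k P) c' m = tailContent n P c' m := by
  have toggle_sub (m r : ℕ) : toggle c k P m r - c' = P m r - c' := by
    rcases eq_or_ne m (k + 1) with rfl | hm
    · have := hP.toggle_sub_self hk hc r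
      omega
    · rw [toggle_of_ne hm]
  simp only [tailContent, toggle_sub]

lemma headSize_toggle_add (hP : IsGTPattern n μ P) (hk : k + 1 < n)
    (hc : ∀ r, P k r ≤ c → P (k + 1) r ≤ c) :
    headSize n (toggle c k P) c (k + 1) + headSize n P c (k + 1) =
      headSize n P c k + headSize n P c (k + 2) := by
  have hsum := sum_toggleUpper_add_toggleLower c k P n
  have hlast : toggleUpper c k P n = 0 := by
    cases n with
    | zero => omega
    | succ n => simp [toggleUpper, hP.eq_zero (k + 2) le_rfl]
  rw [Finset.sum_range_succ, hP.eq_zero (k + 2) le_rfl, hlast] at hsum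
  simp only [headSize, ← Finset.sum_add_distrib, hP.min_toggle_add hk hc]
  simpa [Finset.sum_add_distrib] using hsum

lemma content_toggle (hP : IsGTPattern n μ P) (hk : k + 1 < n)
    (hc : ∀ r, P k r ≤ c → P (k + 1) r ≤ c) :
    content n (toggle c k P) k + tailContent n P c (k + 1) =
        content n P (k + 1) + tailContent n P c k ∧
      content n (toggle c k P) (k + 1) + tailContent n P c k =
        content n P k + tailContent n P c (k + 1) := by
  have hT := hP.isGTPattern_toggle hk hc
  have headSize_toggle {m : ℕ} (hm : m ≠ k + 1) :
      headSize n (toggle c k P) c m = headSize n P c m := by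
    simp only [headSize, toggle_of_ne hm]
  have h₁ := hT.content_add_headSize c k
  have h₂ : _ = _ + headSize _ _ c (k + 2) := hT.content_add_headSize c (k + 1)
  have h₃ := hP.content_add_headSize c k
  have h₄ : _ = _ + headSize _ _ c (k + 2) := hP.content_add_headSize c (k + 1)
  have h₅ := hP.headSize_toggle_add hk hc
  rw [hP.tailContent_toggle hk hc le_rfl, headSize_toggle (m := k) (by omega)] at h₁
  rw [hP.tailContent_toggle hk hc le_rfl, headSize_toggle (m := k + 2) (by omega)] at h₂
  omega

end IsGTPattern

lemma content_toggle_of_ne {m : ℕ} (hm : m ≠ k) (hm' : m ≠ k + 1) :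
    content n (toggle c k P) m = content n P m := by
  simp only [content, tailContent, toggle_of_ne hm',
    toggle_of_ne (show m + 1 ≠ k + 1 by omega)]

end Toggle

/-! ### Schur polynomials as sums over patterns -/

section GTSchur

variable {R : Type*} [CommRing R] {n : ℕ} {μ : ℕ → ℕ}

/-- The Schur polynomial of shape `μ` as a sum over patterns, evaluated at `x`. It is `0` unless
`μ` is weakly decreasing with at most `n` nonzero parts, because then there are no patterns. -/
noncomputable def gtSchur (n : ℕ) (μ : ℕ → ℕ) (x : Fin n → R) : R :=
  ∑ P ∈ gtPatterns n μ, ∏ i : Fin n, x i ^ content n P i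

lemma gtSchur_eq_zero {r : ℕ} (hr : n ≤ r) (hμ : μ r ≠ 0) (x : Fin n → R) :
    gtSchur n μ x = 0 :=
  Finset.sum_eq_zero fun _ hP => absurd ((mem_gtPatterns.1 hP).top_eq_zero hr) hμ

lemma gtSchur_eq_zero_of_not_antitone (hμ : ¬Antitone μ) (x : Fin n → R) :
    gtSchur n μ x = 0 :=
  Finset.sum_eq_zero fun _ hP => absurd (mem_gtPatterns.1 hP).antitone_top hμ

lemma gtSchur_comp_adjacent_swap (x : Fin n → R) {i j : Fin n} (hij : (j : ℕ) = i + 1) :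
    gtSchur n μ (x ∘ Equiv.swap i j) = gtSchur n μ x := by
  have hk : (i : ℕ) + 1 < n := hij ▸ j.isLt
  have column_full {P : ℕ → ℕ → ℕ} (hP : P ∈ gtPatterns n μ) (r : ℕ) (_ : P i r ≤ μ 0) :
      P (i + 1) r ≤ μ 0 := (mem_gtPatterns.1 hP).le_top_zero _ _
  have toggle_mem (P) (hP : P ∈ gtPatterns n μ) : toggle (μ 0) i P ∈ gtPatterns n μ :=
    mem_gtPatterns.2 <| (mem_gtPatterns.1 hP).isGTPattern_toggle hk (column_full hP)
  have toggle_toggle (P) (hP : P ∈ gtPatterns n μ) : toggle (μ 0) i (toggle (μ 0) i P) = P :=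
    (mem_gtPatterns.1 hP).toggle_toggle hk (column_full hP)
  refine Finset.sum_nbij' (toggle (μ 0) i) (toggle (μ 0) i) toggle_mem toggle_mem
    toggle_toggle toggle_toggle fun P hP => ?_
  obtain ⟨hi, hj⟩ := (mem_gtPatterns.1 hP).content_toggle hk (column_full hP)
  simp only [(mem_gtPatterns.1 hP).tailContent_top_zero le_rfl, add_zero] at hi hj
  have content_eq : (fun m : Fin n => content n P m) =
      (fun m : Fin n => content n (toggle (μ 0) i P) m) ∘ Equiv.swap i j := by
    refine eq_comp_swap (by rw [hij, hj]) (by rw [hij, hi]) fun m hmi hmj => ?_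
    rw [content_toggle_of_ne (by omega) (by omega)]
  rw [← Equiv.prod_comp (Equiv.swap i j) fun m => x m ^ content n (toggle (μ 0) i P) m]
  exact Finset.prod_congr rfl fun m _ => congrArg _ (congrFun content_eq m)

lemma gtSchur_comp_perm (σ : Equiv.Perm (Fin n)) (x : Fin n → R) :
    gtSchur n μ (x ∘ σ) = gtSchur n μ x := by
  cases n with
  | zero => exact congrArg _ (Subsingleton.elim _ _)
  | succ n =>
    have hσ : σ ∈ Submonoid.closure (Set.range fun i : Fin n ↦ Equiv.swap i.castSucc i.succ) := by
      rw [Equiv.Perm.mclosure_swap_castSucc_succ]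
      trivial
    induction hσ using Submonoid.closure_induction generalizing x with
    | mem τ hτ =>
      obtain ⟨i, rfl⟩ := hτ
      exact gtSchur_comp_adjacent_swap x (by simp)
    | one => rfl
    | mul σ τ _ _ hσ hτ => rw [Equiv.Perm.coe_mul, ← Function.comp_assoc, hτ, hσ]

lemma alternant_mul_gtSchur (x : Fin n → R) (α : Fin n → ℕ) :
    alternant x α * gtSchur n μ x =
      ∑ P ∈ gtPatterns n μ, alternant x fun i => α i + content n P i := by
  simp only [alternant, Matrix.det_apply]
  rw [Finset.sum_comm, Finset.sum_mul]
  refine Finset.sum_congr rfl fun σ _ => ?_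
  rw [← gtSchur_comp_perm σ x, gtSchur, smul_mul_assoc, Finset.mul_sum, Finset.smul_sum]
  simp only [← Finset.prod_mul_distrib, Matrix.of_apply, Function.comp_apply, pow_add]

end GTSchur

/-! ### The Littlewood–Richardson rule -/

section LittlewoodRichardson

variable {n : ℕ} {l μ : ℕ → ℕ} {P : ℕ → ℕ → ℕ} {p : ℕ × ℕ}

/-- The pattern `P` is Littlewood–Richardson relative to `l`: adding the contents of the columns
`c, c + 1, …` of its tableau to `l` yields a weakly decreasing sequence for every `c`. -/
def IsLRPattern (n : ℕ) (l : ℕ → ℕ) (P : ℕ → ℕ → ℕ) : Prop :=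
  ∀ c, Antitone (l + tailContent n P c)

/-- `P` fails to be Littlewood–Richardson relative to `l` at column `c` and letter `k`. -/
def IsViolation (n : ℕ) (l : ℕ → ℕ) (P : ℕ → ℕ → ℕ) (c k : ℕ) : Prop :=
  l k + tailContent n P c k < l (k + 1) + tailContent n P c (k + 1)

/-- `p = (c, k)` is the violation met first when columns are read from right to left, and letters
within a column in increasing order. -/
structure IsFirstViolation (n : ℕ) (l : ℕ → ℕ) (P : ℕ → ℕ → ℕ) (p : ℕ × ℕ) : Prop where
  isViolation : IsViolation n l P p.1 p.2
  column_max : ∀ c k, IsViolation n l P c k → c ≤ p.1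
  letter_min : ∀ k, IsViolation n l P p.1 k → p.2 ≤ k

lemma IsFirstViolation.unique {q : ℕ × ℕ} (hp : IsFirstViolation n l P p)
    (hq : IsFirstViolation n l P q) : p = q := by
  have hc : p.1 = q.1 := (hq.column_max _ _ hp.isViolation).antisymm
    (hp.column_max _ _ hq.isViolation)
  refine Prod.ext hc ((hp.letter_min _ ?_).antisymm (hq.letter_min _ ?_))
  · exact hc ▸ hq.isViolation
  · exact hc ▸ hp.isViolation

namespace IsGTPattern

lemma exists_isFirstViolation (hP : IsGTPattern n μ P) (hl : Antitone l)
    (h : ¬IsLRPattern n l P) : ∃ p, IsFirstViolation n l P p := by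
  classical
  have column_le {c k : ℕ} (hck : IsViolation n l P c k) : c ≤ μ 0 := by
    by_contra! hc
    rw [IsViolation, hP.tailContent_top_zero hc.le, hP.tailContent_top_zero hc.le] at hck
    have : l (k + 1) ≤ l k := hl k.le_succ
    omega
  obtain ⟨c₀, h₀⟩ : ∃ c, ∃ k, IsViolation n l P c k := by
    by_contra! hno
    exact h fun c => antitone_nat_of_succ_le fun k => not_lt.1 (hno c k)
  have hc : ∃ k, IsViolation n l P (Nat.findGreatest (∃ k, IsViolation n l P · k) (μ 0)) k :=
    Nat.findGreatest_spec (P := (∃ k, IsViolation n l P · k)) (column_le h₀.choose_spec) h₀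
  exact ⟨(_, Nat.find hc), Nat.find_spec hc,
    fun c k hck => Nat.le_findGreatest (column_le hck) ⟨k, hck⟩, fun k => Nat.find_min' hc⟩

lemma letter_add_one_lt (hP : IsGTPattern n μ P) (hl : Antitone l)
    (hp : IsFirstViolation n l P p) : p.2 + 1 < n := by
  by_contra! hn
  have hviol := hp.isViolation
  rw [IsViolation, hP.tailContent_eq_zero _ hn] at hviol
  have : l (p.2 + 1) ≤ l p.2 := hl p.2.le_succ
  omega

/-- There is no violation in column `c + 1`, and column `c` contains each letter at most once, so
it contains `k + 1` but not `k`. -/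
lemma tailContent_of_isFirstViolation (hP : IsGTPattern n μ P) (hp : IsFirstViolation n l P p) :
    tailContent n P p.1 p.2 = tailContent n P (p.1 + 1) p.2 ∧
      l p.2 + tailContent n P p.1 p.2 + 1 = l (p.2 + 1) + tailContent n P p.1 (p.2 + 1) := by
  have hviol := hp.isViolation
  have hnext : ¬IsViolation n l P (p.1 + 1) p.2 := fun h => by
    have := hp.column_max _ _ h
    omega
  have h₁ : tailContent n P (p.1 + 1) p.2 ≤ tailContent n P p.1 p.2 :=
    hP.tailContent_antitone p.2 p.1.le_succ
  have h₂ := hP.tailContent_le_succ p.1 (p.2 + 1)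
  unfold IsViolation at hviol hnext
  omega

lemma le_of_isFirstViolation (hP : IsGTPattern n μ P) (hp : IsFirstViolation n l P p) (r : ℕ) :
    P p.2 r ≤ p.1 → P (p.2 + 1) r ≤ p.1 :=
  hP.le_of_tailContent_eq_succ (hP.tailContent_of_isFirstViolation hp).1

lemma isFirstViolation_toggle (hP : IsGTPattern n μ P) (hl : Antitone l)
    (hp : IsFirstViolation n l P p) : IsFirstViolation n l (toggle p.1 p.2 P) p := by
  have isViolation_toggle {c k : ℕ} (hc : p.1 ≤ c) :
      IsViolation n l (toggle p.1 p.2 P) c k ↔ IsViolation n l P c k := by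
    simp only [IsViolation, hP.tailContent_toggle (hP.letter_add_one_lt hl hp)
      (hP.le_of_isFirstViolation hp) hc]
  refine ⟨(isViolation_toggle le_rfl).2 hp.isViolation, fun c k hck => ?_,
    fun k hk => hp.letter_min k ((isViolation_toggle le_rfl).1 hk)⟩
  by_contra! hlt
  exact hlt.not_ge (hp.column_max c k ((isViolation_toggle hlt.le).1 hck))

end IsGTPattern

variable {R : Type*} [CommRing R]

lemma alternant_toggle_eq_neg (hP : IsGTPattern n μ P) (hl : Antitone l)
    (hp : IsFirstViolation n l P p) (x : Fin n → R) :
    alternant x (betaNumber n (l + content n (toggle p.1 p.2 P))) =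
      -alternant x (betaNumber n (l + content n P)) := by
  have hk := hP.letter_add_one_lt hl hp
  obtain ⟨-, hviol⟩ := hP.tailContent_of_isFirstViolation hp
  obtain ⟨hleft, hright⟩ := hP.content_toggle hk (hP.le_of_isFirstViolation hp)
  let i : Fin n := ⟨p.2, by omega⟩
  let j : Fin n := ⟨p.2 + 1, hk⟩
  have hij : i ≠ j := by simp [i, j]
  rw [← alternant_comp_swap x _ hij]
  congr 1
  refine eq_comp_swap ?_ ?_ fun m hmi hmj => ?_
  · simp only [betaNumber, Pi.add_apply, Fin.val_rev, i, j]
    omega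
  · simp only [betaNumber, Pi.add_apply, Fin.val_rev, i, j]
    omega
  · rw [betaNumber, Pi.add_apply, content_toggle_of_ne (fun h => hmi (Fin.ext h))
      (fun h => hmj (Fin.ext h))]
    rfl

lemma alternant_eq_zero_of_toggle_eq (hP : IsGTPattern n μ P) (hl : Antitone l)
    (hp : IsFirstViolation n l P p) (hfix : toggle p.1 p.2 P = P) (x : Fin n → R) :
    alternant x (betaNumber n (l + content n P)) = 0 := by
  have hk := hP.letter_add_one_lt hl hp
  obtain ⟨-, hviol⟩ := hP.tailContent_of_isFirstViolation hp
  obtain ⟨hleft, -⟩ := hP.content_toggle hk (hP.le_of_isFirstViolation hp)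
  rw [hfix] at hleft
  refine alternant_eq_zero x (i := ⟨p.2, by omega⟩) (j := ⟨p.2 + 1, hk⟩) (by simp) ?_
  simp only [betaNumber, Pi.add_apply, Fin.val_rev]
  omega

open Classical in
/-- Toggling at the first violation is a sign-reversing involution on the other patterns. -/
lemma sum_alternant_not_isLRPattern (hl : Antitone l) (x : Fin n → R) :
    ∑ P ∈ gtPatterns n μ with ¬IsLRPattern n l P,
      alternant x (betaNumber n (l + content n P)) = 0 := by
  have isGT {P} (hP : P ∈ (gtPatterns n μ).filter (¬IsLRPattern n l ·)) : IsGTPattern n μ P :=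
    mem_gtPatterns.1 (Finset.mem_filter.1 hP).1
  have hfirst (P) (hP : P ∈ (gtPatterns n μ).filter (¬IsLRPattern n l ·)) :
      ∃ p, IsFirstViolation n l P p :=
    (isGT hP).exists_isFirstViolation hl (Finset.mem_filter.1 hP).2
  choose p hp using hfirst
  have toggle_mem (P) (hP : P ∈ (gtPatterns n μ).filter (¬IsLRPattern n l ·)) :
      toggle (p P hP).1 (p P hP).2 P ∈ (gtPatterns n μ).filter (¬IsLRPattern n l ·) := by
    refine Finset.mem_filter.2 ⟨mem_gtPatterns.2 ((isGT hP).isGTPattern_toggle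
      ((isGT hP).letter_add_one_lt hl (hp P hP)) ((isGT hP).le_of_isFirstViolation (hp P hP))),
      fun hLR => ?_⟩
    exact ((isGT hP).isFirstViolation_toggle hl (hp P hP)).isViolation.not_ge
      (hLR _ (Nat.le_succ _))
  refine Finset.sum_involution (fun P hP => toggle (p P hP).1 (p P hP).2 P)
    (fun P hP => ?_) (fun P hP hne hfix => ?_) toggle_mem fun P hP => ?_
  · rw [alternant_toggle_eq_neg (isGT hP) hl (hp P hP), add_neg_cancel]
  · exact hne (alternant_eq_zero_of_toggle_eq (isGT hP) hl (hp P hP) hfix x)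
  · have same : p _ (toggle_mem P hP) = p P hP :=
      (hp _ (toggle_mem P hP)).unique ((isGT hP).isFirstViolation_toggle hl (hp P hP))
    simp only [same]
    exact (isGT hP).toggle_toggle ((isGT hP).letter_add_one_lt hl (hp P hP))
      ((isGT hP).le_of_isFirstViolation (hp P hP))

open Classical in
lemma alternant_betaNumber_mul_gtSchur (hl : Antitone l) (x : Fin n → R) :
    alternant x (betaNumber n l) * gtSchur n μ x =
      ∑ P ∈ gtPatterns n μ with IsLRPattern n l P,
        alternant x (betaNumber n (l + content n P)) := by
  have hβ (P : ℕ → ℕ → ℕ) :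
      (fun i => betaNumber n l i + content n P i) = betaNumber n (l + content n P) := by
    funext i
    simp only [betaNumber, Pi.add_apply]
    omega
  simp only [alternant_mul_gtSchur, hβ]
  rw [← Finset.sum_filter_add_sum_filter_not _ (IsLRPattern n l),
    sum_alternant_not_isLRPattern hl, add_zero]

end LittlewoodRichardson

/-! ### The bialternant formula -/

section Bialternant

variable {n : ℕ} {μ : ℕ → ℕ} {P : ℕ → ℕ → ℕ}

/-- The pattern of the tableau all of whose entries in row `r` are the letter `r`. -/
def highestPattern (μ : ℕ → ℕ) (m r : ℕ) : ℕ := if r < m then μ r else 0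

lemma eq_zero_of_antitone (hμ : Antitone μ) (hn : μ n = 0) {r : ℕ} (hr : n ≤ r) : μ r = 0 :=
  Nat.eq_zero_of_le_zero (hn ▸ hμ hr)

lemma isGTPattern_highestPattern (hμ : Antitone μ) (hn : μ n = 0) :
    IsGTPattern n μ (highestPattern μ) where
  bot r := if_neg r.not_lt_zero
  succ_le m _ r := by
    have : μ (r + 1) ≤ μ r := hμ r.le_succ
    unfold highestPattern
    split_ifs <;> omega
  le_succ m _ r := by
    unfold highestPattern
    split_ifs <;> omega
  top m hm r := by
    rw [highestPattern, ite_eq_left_iff]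
    exact fun hr => (eq_zero_of_antitone hμ hn (by omega)).symm

lemma tailContent_highestPattern (hμ : Antitone μ) (hn : μ n = 0) (c m : ℕ) :
    tailContent n (highestPattern μ) c m = μ m - c := by
  rcases le_or_gt n m with hm | hm
  · simp [(isGTPattern_highestPattern hμ hn).tailContent_eq_zero c hm,
      eq_zero_of_antitone hμ hn hm]
  rw [tailContent, Finset.sum_eq_single_of_mem m (Finset.mem_range.2 hm) fun r _ hr => ?_]
  · simp [highestPattern]
  · unfold highestPattern
    split_ifs <;> omega

lemma isLRPattern_highestPattern (hμ : Antitone μ) (hn : μ n = 0) :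
    IsLRPattern n 0 (highestPattern μ) := fun c m m' hm => by
  simp only [zero_add, tailContent_highestPattern hμ hn]
  exact Nat.sub_le_sub_right (hμ hm) c

namespace IsGTPattern

lemma le_of_tailContent_eq_zero (hP : IsGTPattern n μ P) {c m r : ℕ}
    (hzero : ∀ m' ≥ m, tailContent n P c m' = 0) (hr : P m r ≤ c) : μ r ≤ c := by
  have levels : ∀ m' ≥ m, P m' r ≤ c := by
    refine Nat.le_induction hr fun m' hm' ih => hP.le_of_tailContent_eq_succ ?_ ih
    have : tailContent n P (c + 1) m' ≤ tailContent n P c m' :=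
      hP.tailContent_antitone m' c.le_succ
    have := hzero m' hm'
    omega
  rw [← hP.top (max m n) (le_max_right m n)]
  exact levels _ (le_max_left m n)

lemma eq_top_of_isLRPattern_zero (hP : IsGTPattern n μ P) (hLR : IsLRPattern n 0 P) (r : ℕ) :
    ∀ m, r < m → P m r = μ r := by
  induction r using Nat.strong_induction_on with
  | _ r ih =>
    intro m hm
    rcases le_or_gt n r with hrn | hrn
    · exact hP.top m (by omega) r
    have hzero : tailContent n P (P (r + 1) r) r = 0 := by
      refine Finset.sum_eq_zero fun s _ => ?_
      rcases lt_trichotomy s r with hs | rfl | hs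
      · rw [ih s hs _ (by omega), ih s hs _ hs, tsub_self]
      · omega
      · rw [hP.eq_zero_of_le (m := r + 1) (by omega) (by omega)]
        omega
    have hzero' (m' : ℕ) (hm' : m' ≥ r) : tailContent n P (P (r + 1) r) m' = 0 := by
      have hle := hLR (P (r + 1) r) hm'
      simp only [zero_add, hzero] at hle
      omega
    have hsub : μ r ≤ P (r + 1) r :=
      hP.le_of_tailContent_eq_zero (m := r + 1) (fun m' hm' => hzero' m' (by omega)) le_rfl
    exact (hP.le_top m r).antisymm (hsub.trans (hP.monotone r hm))

end IsGTPattern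

open Classical in
lemma filter_isLRPattern_zero (hμ : Antitone μ) (hn : μ n = 0) :
    (gtPatterns n μ).filter (IsLRPattern n 0) = {highestPattern μ} := by
  ext P
  rw [Finset.mem_filter, mem_gtPatterns, Finset.mem_singleton]
  constructor
  · rintro ⟨hP, hLR⟩
    funext m r
    rw [highestPattern]
    split_ifs with hrm
    · exact hP.eq_top_of_isLRPattern_zero hLR r m hrm
    rcases le_or_gt m n with hm | hm
    · exact hP.eq_zero_of_le hm (not_lt.1 hrm)
    · exact hP.eq_zero m (by omega)
  · rintro rfl
    exact ⟨isGTPattern_highestPattern hμ hn, isLRPattern_highestPattern hμ hn⟩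

variable {R : Type*} [CommRing R]

lemma alternant_betaNumber_zero_mul_gtSchur (hμ : Antitone μ) (hn : μ n = 0) (x : Fin n → R) :
    alternant x (betaNumber n 0) * gtSchur n μ x = alternant x (betaNumber n μ) := by
  classical
  have hcontent : content n (highestPattern μ) = μ :=
    funext fun m => tailContent_highestPattern hμ hn 0 m
  rw [alternant_betaNumber_mul_gtSchur (fun _ _ _ => le_rfl), filter_isLRPattern_zero hμ hn,
    Finset.sum_singleton, hcontent, zero_add]

/-- If `μ` fails to decrease, then both sides vanish: the alternant has two equal columns. -/
lemma alternant_betaNumber_zero_mul_gtSchur_of_succ_le_add_one (hμ : ∀ i, μ (i + 1) ≤ μ i + 1)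
    (hn : ∀ i, n ≤ i → μ i = 0) (x : Fin n → R) :
    alternant x (betaNumber n 0) * gtSchur n μ x = alternant x (betaNumber n μ) := by
  by_cases hanti : Antitone μ
  · exact alternant_betaNumber_zero_mul_gtSchur hanti (hn n le_rfl) x
  obtain ⟨i, hi⟩ : ∃ i, μ i < μ (i + 1) := by
    by_contra! h
    exact hanti (antitone_nat_of_succ_le h)
  have hin : i + 1 < n := by
    by_contra! h
    rw [hn _ h] at hi
    omega
  rw [gtSchur_eq_zero_of_not_antitone hanti, mul_zero, eq_comm]
  refine alternant_eq_zero x (i := ⟨i, by omega⟩) (j := ⟨i + 1, hin⟩) (by simp) ?_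
  have := hμ i
  simp only [betaNumber, Fin.val_rev]
  omega

open Classical in
lemma gtSchur_mul_gtSchur [IsDomain R] {l : ℕ → ℕ} (hl : Antitone l) (hn : l n = 0)
    {x : Fin n → R} (hx : Function.Injective x) :
    gtSchur n l x * gtSchur n μ x =
      ∑ P ∈ gtPatterns n μ with IsLRPattern n l P, gtSchur n (l + content n P) x := by
  refine mul_left_cancel₀ (alternant_betaNumber_zero_ne_zero hx) ?_
  rw [← mul_assoc, alternant_betaNumber_zero_mul_gtSchur hl hn,
    alternant_betaNumber_mul_gtSchur hl, Finset.mul_sum]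
  refine Finset.sum_congr rfl fun P hP => ?_
  obtain ⟨hP, hLR⟩ := Finset.mem_filter.1 hP
  refine (alternant_betaNumber_zero_mul_gtSchur (hLR 0) ?_ x).symm
  simp [hn, (mem_gtPatterns.1 hP).tailContent_eq_zero 0 le_rfl]

end Bialternant

/-! ### Tableaux as patterns -/

section Tableau

lemma lt_count_iff {p : ℕ → Prop} [DecidablePred p] {N : ℕ}
    (hp : ∀ i j, i ≤ j → j < N → p j → p i) (j : ℕ) : j < Nat.count p N ↔ j < N ∧ p j := by
  induction N with
  | zero => simp
  | succ N ih =>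
    rw [Nat.count_succ]
    split_ifs with hN
    · have hall : ∀ i < N + 1, p i := fun i hi => hp i N (by omega) N.lt_succ_self hN
      rw [Nat.count_iff_forall.2 fun i hi => hall i (hi.trans N.lt_succ_self)]
      exact ⟨fun hj => ⟨hj, hall j hj⟩, And.left⟩
    · rw [add_zero, ih fun i j hij hj => hp i j hij (hj.trans N.lt_succ_self)]
      refine ⟨fun h => ⟨h.1.trans N.lt_succ_self, h.2⟩, fun h => ⟨?_, h.2⟩⟩
      refine lt_of_le_of_ne (Nat.lt_succ_iff.1 h.1) ?_
      rintro rfl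
      exact hN h.2

/-- The row lengths of the shape `(lam 0, …, lam (k - 1))`, extended by `0`. -/
def rowLengths (k : ℕ) (lam : ℕ → ℤ) (r : ℕ) : ℕ := if r < k then (lam r).toNat else 0

variable {k n : ℕ} {lam : ℕ → ℤ}

lemma lt_rowLengths_iff {r j : ℕ} : j < rowLengths k lam r ↔ r < k ∧ (j : ℤ) < lam r := by
  unfold rowLengths
  split_ifs with h <;> simp [h]

lemma rowLengths_of_le {r : ℕ} (hr : k ≤ r) : rowLengths k lam r = 0 := if_neg hr.not_gt

lemma IsPartitionSeq.coe_rowLengths (h : IsPartitionSeq k lam) {r : ℕ} (hr : r < k) :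
    (rowLengths k lam r : ℤ) = lam r := by
  rw [rowLengths, if_pos hr, Int.toNat_of_nonneg (h.2 r hr)]

lemma IsPartitionSeq.antitone_rowLengths (h : IsPartitionSeq k lam) :
    Antitone (rowLengths k lam) := by
  refine antitone_nat_of_succ_le fun i => ?_
  have := h.1 i
  unfold rowLengths
  split_ifs <;> omega

namespace SSYT

lemma entry_injective {a b : ℕ} : Function.Injective (entry : SSYT k lam a b → ℕ → ℕ → ℕ) := by
  rintro ⟨_⟩ ⟨_⟩ rfl
  rfl

/-- The Gelfand–Tsetlin pattern of a tableau; the entry `m + 1` corresponds to the letter `m`. -/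
def toPattern (T : SSYT k lam 1 n) (m r : ℕ) : ℕ :=
  Nat.count (T.entry r · ≤ m) (rowLengths k lam r)

lemma lt_toPattern_iff (T : SSYT k lam 1 n) {m r j : ℕ} :
    j < T.toPattern m r ↔ j < rowLengths k lam r ∧ T.entry r j ≤ m := by
  refine lt_count_iff (fun i j hij hj hle => ?_) j
  obtain ⟨hr, hj⟩ := lt_rowLengths_iff.1 hj
  exact (T.row_weak r i j hr hij hj).trans hle

lemma isGTPattern_toPattern (h : IsPartitionSeq k lam) (T : SSYT k lam 1 n) :
    IsGTPattern n (rowLengths k lam) T.toPattern where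
  bot r := by
    by_contra hne
    obtain ⟨hrow, hentry⟩ := T.lt_toPattern_iff.1 (Nat.pos_of_ne_zero hne)
    obtain ⟨hr, h0⟩ := lt_rowLengths_iff.1 hrow
    have := T.lower r 0 hr h0
    omega
  succ_le m _ r := le_of_forall_lt fun j hj => by
    rw [lt_toPattern_iff] at *
    obtain ⟨hr, hj'⟩ := lt_rowLengths_iff.1 hj.1
    have := T.col_strict r (r + 1) j r.lt_succ_self hr hj'
    exact ⟨hj.1.trans_le (h.antitone_rowLengths r.le_succ), by omega⟩
  le_succ m _ r := le_of_forall_lt fun j hj => by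
    rw [lt_toPattern_iff] at *
    omega
  top m hm r := eq_of_forall_lt_iff fun j => by
    rw [lt_toPattern_iff, and_iff_left_iff_imp]
    intro hj
    obtain ⟨hr, hj⟩ := lt_rowLengths_iff.1 hj
    exact (T.upper r j hr hj).trans hm

end SSYT

/-- The entry in row `r` and column `j` of the tableau of a pattern. -/
def patternEntry (n : ℕ) (μ : ℕ → ℕ) (P : ℕ → ℕ → ℕ) (r j : ℕ) : ℕ :=
  if j < μ r then Nat.count (P · r ≤ j) n else 0

namespace IsGTPattern

variable {μ : ℕ → ℕ} {P : ℕ → ℕ → ℕ}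

lemma patternEntry_le_iff (hP : IsGTPattern n μ P) {r j : ℕ} (hj : j < μ r) (m : ℕ) :
    patternEntry n μ P r j ≤ m ↔ j < P m r := by
  rw [patternEntry, if_pos hj, ← not_lt, lt_count_iff fun i m him _ => (hP.monotone r him).trans]
  rcases lt_or_ge m n with hm | hm
  · simp [hm]
  · simpa [hm.not_gt, hP.top m hm] using hj

lemma patternEntry_lt_succ (hP : IsGTPattern n μ P) {r j : ℕ} (hj : j < μ (r + 1)) :
    patternEntry n μ P r j < patternEntry n μ P (r + 1) j := by
  have hle : patternEntry n μ P (r + 1) j ≤ n := by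
    rwa [hP.patternEntry_le_iff hj, hP.top n le_rfl]
  have hlt := (hP.patternEntry_le_iff hj _).1 le_rfl
  cases he : patternEntry n μ P (r + 1) j with
  | zero =>
    rw [he, hP.bot] at hlt
    omega
  | succ e =>
    rw [he] at hlt hle
    rw [Nat.lt_succ_iff, hP.patternEntry_le_iff (hj.trans_le (hP.antitone_top r.le_succ))]
    exact hlt.trans_le (hP.succ_le e hle r)

lemma patternEntry_lt (hP : IsGTPattern n μ P) {r r' j : ℕ} (hr : r < r') (hj : j < μ r') :
    patternEntry n μ P r j < patternEntry n μ P r' j := by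
  induction r', hr using Nat.le_induction with
  | base => exact hP.patternEntry_lt_succ hj
  | succ r' _ ih =>
    exact (ih (hj.trans_le (hP.antitone_top r'.le_succ))).trans (hP.patternEntry_lt_succ hj)

/-- The tableau of a Gelfand–Tsetlin pattern, inverse to `SSYT.toPattern`. -/
def toSSYT (hP : IsGTPattern n (rowLengths k lam) P) : SSYT k lam 1 n where
  entry := patternEntry n (rowLengths k lam) P
  zero_outside i j hij := if_neg (by rwa [lt_rowLengths_iff])
  lower i j hi hj := by
    by_contra! hlt
    have := (hP.patternEntry_le_iff (lt_rowLengths_iff.2 ⟨hi, hj⟩) 0).1 (by omega)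
    rw [hP.bot] at this
    omega
  upper i j hi hj := by
    rw [hP.patternEntry_le_iff (lt_rowLengths_iff.2 ⟨hi, hj⟩), hP.top n le_rfl]
    exact lt_rowLengths_iff.2 ⟨hi, hj⟩
  row_weak i j₁ j₂ hi hj hj₂ := by
    have hj₂ := lt_rowLengths_iff.2 ⟨hi, hj₂⟩
    rw [hP.patternEntry_le_iff (hj.trans_lt hj₂)]
    exact hj.trans_lt ((hP.patternEntry_le_iff hj₂ _).1 le_rfl)
  col_strict i₁ i₂ j hi hi₂ hj := hP.patternEntry_lt hi (lt_rowLengths_iff.2 ⟨hi₂, hj⟩)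

end IsGTPattern

/-- Tableaux with entries in `{1, …, n}` are the same as Gelfand–Tsetlin patterns. -/
def ssytEquivPattern (h : IsPartitionSeq k lam) :
    SSYT k lam 1 n ≃ {P // IsGTPattern n (rowLengths k lam) P} where
  toFun T := ⟨T.toPattern, T.isGTPattern_toPattern h⟩
  invFun P := P.2.toSSYT
  left_inv T := by
    have hentry : patternEntry n (rowLengths k lam) T.toPattern = T.entry := by
      funext r j
      by_cases hj : j < rowLengths k lam r
      · refine eq_of_forall_ge_iff fun m => ?_
        rw [(T.isGTPattern_toPattern h).patternEntry_le_iff hj, T.lt_toPattern_iff,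
          and_iff_right hj]
      · rw [T.zero_outside r j (by rwa [← lt_rowLengths_iff]), patternEntry, if_neg hj]
    exact SSYT.entry_injective hentry
  right_inv P := by
    refine Subtype.ext (funext₂ fun m r => eq_of_forall_lt_iff fun j => ?_)
    rw [SSYT.lt_toPattern_iff]
    constructor
    · rintro ⟨hj, hle⟩
      exact (P.2.patternEntry_le_iff hj m).1 hle
    · intro hlt
      have hj := hlt.trans_le (P.2.le_top m r)
      exact ⟨hj, (P.2.patternEntry_le_iff hj m).2 hlt⟩

/-- The variables `x_1, …, x_n`. -/
noncomputable def schurVars (n : ℕ) (i : Fin n) : MvPolynomial ℕ ℤ := MvPolynomial.X (i + 1)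

namespace SSYT

lemma prod_row (h : IsPartitionSeq k lam) (T : SSYT k lam 1 n) (r M : ℕ) :
    ∏ j ∈ Finset.range (T.toPattern M r), (MvPolynomial.X (T.entry r j) : MvPolynomial ℕ ℤ) =
      ∏ m ∈ Finset.range M, MvPolynomial.X (m + 1) ^ (T.toPattern (m + 1) r - T.toPattern m r) := by
  have hP := T.isGTPattern_toPattern h
  induction M with
  | zero => simp [hP.bot]
  | succ M ih =>
    rw [Finset.prod_range_succ, ← ih, ← Finset.prod_range_mul_prod_Ico _ (hP.monotone r M.le_succ),
      ← Nat.card_Ico, ← Finset.prod_const]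
    congr 1
    refine Finset.prod_congr rfl fun j hj => ?_
    obtain ⟨hge, hlt⟩ := Finset.mem_Ico.1 hj
    rw [← not_lt, T.lt_toPattern_iff] at hge
    rw [T.lt_toPattern_iff] at hlt
    congr 1
    omega

lemma weight_eq_prod_range (h : IsPartitionSeq k lam) (T : SSYT k lam 1 n) :
    T.weight = ∏ r ∈ Finset.range n, ∏ j ∈ Finset.range (rowLengths k lam r),
      MvPolynomial.X (T.entry r j) := by
  have hweight : T.weight = ∏ r ∈ Finset.range k, ∏ j ∈ Finset.range (rowLengths k lam r),
      MvPolynomial.X (T.entry r j) :=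
    Finset.prod_congr rfl fun r hr => by rw [rowLengths, if_pos (Finset.mem_range.1 hr)]
  rw [hweight]
  refine Finset.prod_congr_of_eq_on_inter (fun r _ hr => ?_) (fun r _ hr => ?_) fun _ _ _ => rfl
  · rw [Finset.mem_range, not_lt] at hr
    simp [(T.isGTPattern_toPattern h).top_eq_zero hr]
  · rw [Finset.mem_range] at hr
    simp [rowLengths, hr]

lemma weight_eq (h : IsPartitionSeq k lam) (T : SSYT k lam 1 n) :
    T.weight = ∏ i : Fin n, schurVars n i ^ content n T.toPattern i := by
  have hP := T.isGTPattern_toPattern h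
  calc T.weight
      = ∏ r ∈ Finset.range n, ∏ m ∈ Finset.range n,
          MvPolynomial.X (m + 1) ^ (T.toPattern (m + 1) r - T.toPattern m r) := by
        simp only [T.weight_eq_prod_range h, ← T.prod_row h, hP.top n le_rfl]
    _ = ∏ m ∈ Finset.range n, MvPolynomial.X (m + 1) ^ content n T.toPattern m := by
        rw [Finset.prod_comm]
        exact Finset.prod_congr rfl fun m _ => Finset.prod_pow_eq_pow_sum _ _ _
    _ = ∏ i : Fin n, schurVars n i ^ content n T.toPattern i := Finset.prod_range _

end SSYT

lemma schur_of_not_isPartitionSeq {a b : ℕ} (h : ¬IsPartitionSeq k lam) : schur k lam a b = 0 :=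
  if_neg h

lemma schur_eq_gtSchur_rowLengths (h : IsPartitionSeq k lam) :
    schur k lam 1 n = gtSchur n (rowLengths k lam) (schurVars n) := by
  rw [schur, if_pos h]
  calc ∑ᶠ T : SSYT k lam 1 n, T.weight
      = ∑ᶠ P : {P // IsGTPattern n (rowLengths k lam) P},
          ∏ i : Fin n, schurVars n i ^ content n P.1 i := by
        rw [← finsum_comp_equiv (ssytEquivPattern h)]
        exact finsum_congr (SSYT.weight_eq h)
    _ = gtSchur n (rowLengths k lam) (schurVars n) := by
        rw [finsum_subtype_eq_finsum_cond
          (f := fun P => ∏ i : Fin n, schurVars n i ^ content n P i)]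
        exact finsum_mem_eq_finite_toFinset_sum _ (setOf_isGTPattern_finite n (rowLengths k lam))

lemma schur_eq_gtSchur {μ : ℕ → ℕ} (hμ : Antitone μ) (hlam : ∀ i < k, lam i = μ i)
    (hzero : ∀ i ≥ k, μ i = 0) : schur k lam 1 n = gtSchur n μ (schurVars n) := by
  have hpart : IsPartitionSeq k lam := by
    refine ⟨fun i hi => ?_, fun i hi => by simp [hlam i hi]⟩
    rw [hlam i (by omega), hlam (i + 1) hi]
    exact_mod_cast hμ i.le_succ
  have hrow : rowLengths k lam = μ := by
    funext r
    unfold rowLengths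
    split_ifs with hr
    · simp [hlam r hr]
    · exact (hzero r (not_lt.1 hr)).symm
  rw [schur_eq_gtSchur_rowLengths hpart, hrow]

end Tableau

/-! ### Schur positivity of products -/

section Positivity

variable {n : ℕ}

namespace SchurPositive

lemma zero : SchurPositive n 0 := ⟨[], by simp, by simp⟩

lemma add {f g : MvPolynomial ℕ ℤ} (hf : SchurPositive n f) (hg : SchurPositive n g) :
    SchurPositive n (f + g) := by
  obtain ⟨L, hL, rfl⟩ := hf
  obtain ⟨L', hL', rfl⟩ := hg
  refine ⟨L ++ L', fun p hp => ?_, by rw [List.map_append, List.sum_append]⟩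
  exact (List.mem_append.1 hp).elim (hL p) (hL' p)

lemma sum {ι : Type*} {s : Finset ι} {f : ι → MvPolynomial ℕ ℤ}
    (hf : ∀ i ∈ s, SchurPositive n (f i)) : SchurPositive n (∑ i ∈ s, f i) :=
  Finset.sum_induction f (SchurPositive n) (fun _ _ => add) zero hf

end SchurPositive

lemma schurPositive_gtSchur (μ : ℕ → ℕ) : SchurPositive n (gtSchur n μ (schurVars n)) := by
  by_cases hμ : Antitone μ
  swap
  · rw [gtSchur_eq_zero_of_not_antitone hμ]
    exact .zero
  by_cases hn : μ n = 0
  swap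
  · rw [gtSchur_eq_zero le_rfl hn]
    exact .zero
  refine ⟨[(n, fun i => μ i)], ?_, ?_⟩
  · simp only [List.mem_singleton, forall_eq]
    exact ⟨fun i _ => Int.ofNat_le.2 (hμ i.le_succ), fun i _ => Int.natCast_nonneg _⟩
  · simp [schur_eq_gtSchur hμ (fun _ _ => rfl) fun _ => eq_zero_of_antitone hμ hn]

lemma schurVars_injective (n : ℕ) : Function.Injective (schurVars n) := fun _ _ h =>
  Fin.ext (Nat.succ_injective (MvPolynomial.X_injective h))

lemma schurPositive_gtSchur_mul_gtSchur (l μ : ℕ → ℕ) :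
    SchurPositive n (gtSchur n l (schurVars n) * gtSchur n μ (schurVars n)) := by
  classical
  by_cases hl : Antitone l
  swap
  · rw [gtSchur_eq_zero_of_not_antitone hl, zero_mul]
    exact .zero
  by_cases hn : l n = 0
  swap
  · rw [gtSchur_eq_zero le_rfl hn, zero_mul]
    exact .zero
  rw [gtSchur_mul_gtSchur hl hn (schurVars_injective n)]
  exact .sum fun P _ => schurPositive_gtSchur _

lemma schurPositive_schur_mul_schur (k k' : ℕ) (lam lam' : ℕ → ℤ) :
    SchurPositive n (schur k lam 1 n * schur k' lam' 1 n) := by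
  by_cases h : IsPartitionSeq k lam
  swap
  · rw [schur_of_not_isPartitionSeq h, zero_mul]
    exact .zero
  by_cases h' : IsPartitionSeq k' lam'
  swap
  · rw [schur_of_not_isPartitionSeq h', mul_zero]
    exact .zero
  rw [schur_eq_gtSchur_rowLengths h, schur_eq_gtSchur_rowLengths h']
  exact schurPositive_gtSchur_mul_gtSchur _ _

end Positivity

/-! ### A Plücker relation for Schur polynomials -/

section Plucker

variable {n : ℕ} {μ : ℕ → ℕ}

/-- The sum of the shape `μ` and a single column of height `s`. -/
def addColumn (s : ℕ) (μ : ℕ → ℕ) (t : ℕ) : ℕ := if t < s then μ t + 1 else μ t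

/-- The shape whose `n - 1` beta numbers are those of `μ` other than the `i`-th, when `μ` has at
most `n` rows. -/
def deleteBeta (i : ℕ) (μ : ℕ → ℕ) (t : ℕ) : ℕ := if t < i then μ t + 1 else μ (t + 1)

/-- The sequence whose beta numbers are those of `μ` with the `s`-th replaced by one more than the
`i`-th, for `i < s`. It need not be weakly decreasing. -/
def replaceBeta (i s : ℕ) (μ : ℕ → ℕ) (t : ℕ) : ℕ :=
  if t < i ∨ s < t then μ t else if t = i then μ i + 1 else μ (t - 1) + 1

lemma addColumn_of_le {s t : ℕ} (h : s ≤ t) : addColumn s μ t = μ t := if_neg h.not_gt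

lemma antitone_addColumn (hμ : Antitone μ) (s : ℕ) : Antitone (addColumn s μ) :=
  antitone_nat_of_succ_le fun i => by
    have : μ (i + 1) ≤ μ i := hμ i.le_succ
    unfold addColumn
    split_ifs <;> omega

lemma antitone_deleteBeta (hμ : Antitone μ) (i : ℕ) : Antitone (deleteBeta i μ) :=
  antitone_nat_of_succ_le fun t => by
    have h₁ : μ (t + 1) ≤ μ t := hμ t.le_succ
    have h₂ : μ (t + 1 + 1) ≤ μ (t + 1) := hμ (t + 1).le_succ
    unfold deleteBeta
    split_ifs <;> omega

lemma replaceBeta_succ_le (hμ : Antitone μ) (i s t : ℕ) :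
    replaceBeta i s μ (t + 1) ≤ replaceBeta i s μ t + 1 := by
  have h₁ : μ (t + 1) ≤ μ t := hμ t.le_succ
  have h₂ : μ t ≤ μ (t - 1) := hμ (t.sub_le 1)
  unfold replaceBeta
  grind

variable {R : Type*} [CommRing R]

lemma alternant_betaNumber_deleteBeta (hn : μ n = 0) (x : Fin n → R) (i : Fin n) :
    alternant x (betaNumber n (deleteBeta i μ)) =
      (-1) ^ (n - 1 - i : ℕ) *
        alternant x (Function.update (fun j => betaNumber n μ j + 1) i 0) := by
  have hi : (i : ℕ) ≤ n - 1 := by omega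
  refine alternant_rotate x (j := ⟨n - 1, by omega⟩) hi (fun k hk => ?_)
    (fun k k' hik _ hk' => ?_) ?_
  · have hki : k < i := hk.resolve_right fun h => by
      rw [Fin.lt_def] at h
      dsimp only at h
      omega
    rw [Function.update_of_ne hki.ne, betaNumber, betaNumber, deleteBeta,
      if_pos (Fin.lt_def.1 hki), add_right_comm]
  · have hne : k' ≠ i := by
      rintro rfl
      omega
    rw [Function.update_of_ne hne, betaNumber, betaNumber, deleteBeta, if_neg (by omega), hk']
    simp only [Fin.val_rev]
    omega
  · rw [Function.update_self, betaNumber, deleteBeta, if_neg hi.not_gt]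
    simp only [Fin.val_rev]
    rw [Nat.sub_add_cancel (by omega), hn]
    omega

lemma alternant_update_betaNumber_addColumn (x : Fin n → R) {i s : Fin n} (his : i < s) :
    alternant x (Function.update (betaNumber n μ) s (betaNumber n (addColumn s μ) i)) =
      (-1) ^ (s - i : ℕ) * alternant x (betaNumber n (replaceBeta i s μ)) := by
  refine alternant_rotate x his.le (fun k hk => ?_) (fun k k' hik hks hk' => ?_) ?_
  · have hks : k ≠ s := by
      rintro rfl
      omega
    rw [Function.update_of_ne hks, betaNumber, betaNumber, replaceBeta,
      if_pos (hk.imp Fin.lt_def.1 Fin.lt_def.1)]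
  · rw [Function.update_of_ne hks.ne, betaNumber, betaNumber, replaceBeta, if_neg (by omega),
      if_neg (by omega), hk', Nat.add_sub_cancel]
    simp only [Fin.val_rev]
    omega
  · rw [Function.update_self, betaNumber, betaNumber, addColumn, replaceBeta,
      if_pos (Fin.lt_def.1 his), if_neg (by omega), if_pos rfl]

lemma alternant_update_betaNumber_addColumn_eq_zero (x : Fin n → R) {i s : Fin n} (his : s < i) :
    alternant x (Function.update (betaNumber n μ) s (betaNumber n (addColumn s μ) i)) = 0 := by
  refine alternant_eq_zero x his.ne ?_
  rw [Function.update_self, Function.update_of_ne his.ne', betaNumber, betaNumber,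
    addColumn_of_le (Fin.lt_def.1 his).le]

lemma alternant_update_betaNumber_addColumn_self (x : Fin n → R) (s : Fin n) :
    alternant x (Function.update (betaNumber n μ) s (betaNumber n (addColumn s μ) s)) =
      alternant x (betaNumber n μ) := by
  rw [betaNumber, addColumn_of_le le_rfl]
  exact congrArg _ (Function.update_eq_self s _)

/-- The exchange relation for the shifted exponents `β + 1`, which free the exponent `0`. -/
lemma alternant_addColumn_mul_alternant_update [IsDomain R] {x : Fin n → R} (hx : ∀ i, x i ≠ 0)
    (s : Fin n) :
    alternant x (betaNumber n (addColumn s μ)) *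
        alternant x (Function.update (fun j => betaNumber n μ j + 1) s 0) =
      ∑ i, alternant x (Function.update (fun j => betaNumber n (addColumn s μ) j + 1) i 0) *
        alternant x (Function.update (betaNumber n μ) s (betaNumber n (addColumn s μ) i)) := by
  have hprod : ∏ i, x i ≠ 0 := Finset.prod_ne_zero_iff.2 fun i _ => hx i
  refine mul_left_cancel₀ hprod ?_
  rw [← mul_assoc, ← alternant_add_one, alternant_mul_alternant_update, Finset.mul_sum]
  refine Finset.sum_congr rfl fun i _ => ?_
  rw [mul_left_comm, ← alternant_add_one]
  congr 2
  funext j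
  rcases eq_or_ne j s with rfl | hj <;> simp [*]

lemma alternant_addColumn_mul_alternant_deleteBeta [IsDomain R] (hn : μ n = 0) {x : Fin n → R}
    (hx : ∀ i, x i ≠ 0) (s : Fin n) :
    alternant x (betaNumber n (addColumn s μ)) * alternant x (betaNumber n (deleteBeta s μ)) =
      alternant x (betaNumber n (deleteBeta s (addColumn s μ))) * alternant x (betaNumber n μ) +
        ∑ i ∈ Finset.Iio s, alternant x (betaNumber n (deleteBeta i (addColumn s μ))) *
          alternant x (betaNumber n (replaceBeta i s μ)) := by
  have hn' : addColumn s μ n = 0 := by rw [addColumn_of_le s.isLt.le, hn]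
  rw [alternant_betaNumber_deleteBeta hn, mul_left_comm,
    alternant_addColumn_mul_alternant_update hx,
    ← Finset.sum_subset (Finset.subset_univ (Finset.Iic s)), ← Finset.Iio_insert,
    Finset.sum_insert (by simp), mul_add, Finset.mul_sum]
  · congr 1
    · rw [alternant_update_betaNumber_addColumn_self, alternant_betaNumber_deleteBeta hn',
        mul_assoc]
    · refine Finset.sum_congr rfl fun i hi => ?_
      have his := Finset.mem_Iio.1 hi
      have hsign : n - 1 - i = (n - 1 - s) + (s - i : ℕ) := by omega
      rw [alternant_update_betaNumber_addColumn x his, alternant_betaNumber_deleteBeta hn', hsign,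
        pow_add]
      ring
  · intro i _ hi
    rw [Finset.mem_Iic, not_le] at hi
    rw [alternant_update_betaNumber_addColumn_eq_zero x hi, mul_zero]

lemma gtSchur_addColumn_mul_gtSchur_deleteBeta [IsDomain R] (hμ : Antitone μ) (hn : μ n = 0)
    {x : Fin n → R} (hx : ∀ i, x i ≠ 0) (hinj : Function.Injective x) (s : Fin n) :
    gtSchur n (addColumn s μ) x * gtSchur n (deleteBeta s μ) x =
      gtSchur n (deleteBeta s (addColumn s μ)) x * gtSchur n μ x +
        ∑ i ∈ Finset.Iio s, gtSchur n (deleteBeta i (addColumn s μ)) x *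
          gtSchur n (replaceBeta i s μ) x := by
  have hV := alternant_betaNumber_zero_ne_zero hinj
  have hanti := antitone_addColumn hμ s
  have hzero (r : ℕ) (hr : n ≤ r) : μ r = 0 := eq_zero_of_antitone hμ hn hr
  have bialternant_deleteBeta (i : Fin n) {l : ℕ → ℕ} (hl : Antitone l) (hln : l n = 0) :
      alternant x (betaNumber n (deleteBeta i l)) =
        alternant x (betaNumber n 0) * gtSchur n (deleteBeta i l) x := by
    refine (alternant_betaNumber_zero_mul_gtSchur (antitone_deleteBeta hl i) ?_ x).symm
    rw [deleteBeta, if_neg i.isLt.not_gt, eq_zero_of_antitone hl hln n.le_succ]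
  have bialternant_replaceBeta (i : Fin n) :
      alternant x (betaNumber n (replaceBeta i s μ)) =
        alternant x (betaNumber n 0) * gtSchur n (replaceBeta i s μ) x := by
    refine (alternant_betaNumber_zero_mul_gtSchur_of_succ_le_add_one
      (replaceBeta_succ_le hμ i s) (fun r hr => ?_) x).symm
    rw [replaceBeta, if_pos (by omega), hzero r hr]
  have hn' : addColumn s μ n = 0 := by rw [addColumn_of_le s.isLt.le, hn]
  have key := alternant_addColumn_mul_alternant_deleteBeta hn hx s
  simp only [bialternant_deleteBeta _ hμ hn, bialternant_deleteBeta _ hanti hn',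
    bialternant_replaceBeta, ← alternant_betaNumber_zero_mul_gtSchur hμ hn,
    ← alternant_betaNumber_zero_mul_gtSchur hanti hn'] at key
  refine mul_left_cancel₀ (mul_ne_zero hV hV) ?_
  rw [mul_mul_mul_comm, key, mul_add, Finset.mul_sum, mul_mul_mul_comm]
  simp only [mul_mul_mul_comm]

lemma gtSchur_addColumn_self [IsDomain R] (hμ : Antitone μ) (hn : μ n = 0) {x : Fin n → R}
    (hinj : Function.Injective x) :
    gtSchur n (addColumn n μ) x = (∏ i, x i) * gtSchur n μ x := by
  refine mul_left_cancel₀ (alternant_betaNumber_zero_ne_zero hinj) ?_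
  rw [alternant_betaNumber_zero_mul_gtSchur (antitone_addColumn hμ n)
    (by rw [addColumn_of_le le_rfl, hn]), mul_left_comm,
    alternant_betaNumber_zero_mul_gtSchur hμ hn, ← alternant_add_one]
  congr 1
  funext i
  rw [betaNumber, betaNumber, addColumn, if_pos i.isLt, add_right_comm]

lemma deleteBeta_self_eq_addColumn (hμ : ∀ r, n ≤ r → μ r = 0) :
    deleteBeta n μ = addColumn n μ := by
  funext t
  unfold deleteBeta addColumn
  split_ifs with ht
  · rfl
  · rw [hμ t (by omega), hμ (t + 1) (by omega)]

lemma gtSchur_addColumn_mul_gtSchur_deleteBeta_self [IsDomain R] (hμ : Antitone μ) (hn : μ n = 0)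
    {x : Fin n → R} (hinj : Function.Injective x) :
    gtSchur n (addColumn n μ) x * gtSchur n (deleteBeta n μ) x =
      gtSchur n (deleteBeta n (addColumn n μ)) x * gtSchur n μ x := by
  have hzero (r : ℕ) (hr : n ≤ r) : μ r = 0 := eq_zero_of_antitone hμ hn hr
  have hzero' (r : ℕ) (hr : n ≤ r) : addColumn n μ r = 0 := by rw [addColumn_of_le hr, hzero r hr]
  rw [deleteBeta_self_eq_addColumn hzero, deleteBeta_self_eq_addColumn hzero',
    gtSchur_addColumn_self (antitone_addColumn hμ n) (hzero' n le_rfl) hinj,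
    gtSchur_addColumn_self hμ hn hinj]
  ring

lemma schur_eq_gtSchur_deleteBeta {k s : ℕ} {lam : ℕ → ℤ} (hμ : Antitone μ) (hs : s < k)
    (hlam : ∀ i < k, lam i = μ i) (hzero : ∀ i ≥ k, μ i = 0) :
    schur (k - 1) (fun j => if j < s then lam j + 1 else lam (j + 1)) 1 n =
      gtSchur n (deleteBeta s μ) (schurVars n) := by
  refine schur_eq_gtSchur (antitone_deleteBeta hμ s) (fun i hi => ?_) fun i hi => ?_
  · rw [hlam i (by omega), hlam (i + 1) (by omega), deleteBeta]
    push_cast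
    rfl
  · rw [deleteBeta, if_neg (by omega), hzero (i + 1) (by omega)]

lemma schurPositive_addColumn_mul_deleteBeta_sub (hμ : Antitone μ) (s : ℕ) :
    SchurPositive n
      (gtSchur n (addColumn s μ) (schurVars n) * gtSchur n (deleteBeta s μ) (schurVars n) -
        gtSchur n (deleteBeta s (addColumn s μ)) (schurVars n) * gtSchur n μ (schurVars n)) := by
  by_cases hn : μ n = 0
  swap
  · rw [gtSchur_eq_zero le_rfl hn, mul_zero, sub_zero]
    exact schurPositive_gtSchur_mul_gtSchur _ _
  rcases lt_trichotomy s n with hsn | rfl | hns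
  · rw [gtSchur_addColumn_mul_gtSchur_deleteBeta hμ hn (fun i => MvPolynomial.X_ne_zero _)
      (schurVars_injective n) ⟨s, hsn⟩, add_sub_cancel_left]
    exact .sum fun i _ => schurPositive_gtSchur_mul_gtSchur _ _
  · rw [gtSchur_addColumn_mul_gtSchur_deleteBeta_self hμ hn (schurVars_injective s), sub_self]
    exact .zero
  · have hrow : deleteBeta s (addColumn s μ) n ≠ 0 := by
      rw [deleteBeta, if_pos hns]
      exact Nat.succ_ne_zero _
    rw [gtSchur_eq_zero le_rfl hrow, zero_mul, sub_zero]
    exact schurPositive_gtSchur_mul_gtSchur _ _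

end Plucker

/-- for a partition `ν = (ν_1 ≥ … ≥ ν_k ≥ 0)`, `1 ≤ t ≤ k` and `n ≥ 1`,
`s^{[n]}_ν · s^{[n]}_{(ν_1,…,ν_{t-1},ν_{t+1},…,ν_k)}
 - s^{[n]}_{(ν_1-1,…,ν_{t-1}-1,ν_t,…,ν_k)} · s^{[n]}_{(ν_1+1,…,ν_{t-1}+1,ν_{t+1},…,ν_k)}`
is Schur positive (with `s^{[n]}_α = 0` when `α` is not a partition, built into `schur`). -/
theorem stmt_19 (k t n : ℕ) (ht1 : 1 ≤ t) (htk : t ≤ k) (hn : 1 ≤ n) (nu : ℕ → ℤ)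
    (hdec : ∀ i, i + 1 < k → nu (i + 1) ≤ nu i) (hpos : ∀ i, i < k → 0 ≤ nu i) :
    SchurPositive n
      (schur k nu 1 n *
          schur (k - 1) (fun j => if j < t - 1 then nu j else nu (j + 1)) 1 n -
        schur k (fun j => if j < t - 1 then nu j - 1 else nu j) 1 n *
          schur (k - 1) (fun j => if j < t - 1 then nu j + 1 else nu (j + 1)) 1 n) := by
  set minus : ℕ → ℤ := fun j => if j < t - 1 then nu j - 1 else nu j
  by_cases hminus : IsPartitionSeq k minus
  swap
  · rw [schur_of_not_isPartitionSeq hminus, zero_mul, sub_zero]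
    exact schurPositive_schur_mul_schur _ _ _ _
  set μ := rowLengths k minus
  have hμ : Antitone μ := hminus.antitone_rowLengths
  have hzero (i : ℕ) (hi : i ≥ k) : μ i = 0 := rowLengths_of_le hi
  have hrow (i : ℕ) (hi : i < k) : minus i = μ i := (hminus.coe_rowLengths hi).symm
  have hν := antitone_addColumn hμ (t - 1)
  have hνzero (i : ℕ) (hi : i ≥ k) : addColumn (t - 1) μ i = 0 := by
    rw [addColumn_of_le (by omega), hzero i hi]
  have hνrow (i : ℕ) (hi : i < k) : nu i = addColumn (t - 1) μ i := by
    have := hrow i hi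
    grind [addColumn]
  have hdelete : (fun j => if j < t - 1 then nu j else nu (j + 1)) =
      fun j => if j < t - 1 then minus j + 1 else minus (j + 1) := by
    grind
  rw [hdelete, schur_eq_gtSchur hν hνrow hνzero, schur_eq_gtSchur hμ hrow hzero,
    schur_eq_gtSchur_deleteBeta hμ (by omega) hrow hzero,
    schur_eq_gtSchur_deleteBeta hν (by omega) hνrow hνzero, mul_comm (gtSchur n μ _)]
  exact schurPositive_addColumn_mul_deleteBeta_sub hμ (t - 1)
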